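/- Let R be a Noetherian commutative ring and A an 𝔸ⁿ-fibration over R. Suppose there exists an m-tuple residual variable W = (W₁,…,W_m) of A over R such that A is a stably polynomial algebra over R[W]. Then Ω_R(A) is a stably free A-module. -/

import Mathlib

open TensorProduct

noncomputable section

/-- The residue field `κ(P) = R_P / P R_P` of a commutative ring `R` at a prime ideal `P`. -/
abbrev ResidueFieldAt (R : Type*) [CommRing R] (P : Ideal R) [P.IsPrime] : Type _ :=
  IsLocalRing.ResidueField (Localization.AtPrime P)

/-- `A ⊗_R κ(P)` is a polynomial ring in `n` variables over `B ⊗_R κ(P)`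
for every prime ideal `P` of `R`. -/
def FibersPolynomialOver (R B A : Type*) [CommRing R] [CommRing B] [CommRing A]
    [Algebra R B] [Algebra R A] [Algebra B A] [IsScalarTower R B A] (n : ℕ) : Prop :=
  ∀ (P : Ideal R) (_ : P.IsPrime),
    letI : Algebra (ResidueFieldAt R P ⊗[R] B) (ResidueFieldAt R P ⊗[R] A) :=
      (Algebra.TensorProduct.map (AlgHom.id R (ResidueFieldAt R P))
        (IsScalarTower.toAlgHom R B A)).toRingHom.toAlgebra
    Nonempty ((ResidueFieldAt R P ⊗[R] A) ≃ₐ[ResidueFieldAt R P ⊗[R] B]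
      MvPolynomial (Fin n) (ResidueFieldAt R P ⊗[R] B))

/-- `A` is an `𝔸ⁿ`-fibration over `R`: a finitely generated flat `R`-algebra all of whose
fibres are polynomial rings in `n` variables. -/
def IsAffineFibration (R A : Type*) [CommRing R] [CommRing A] [Algebra R A] (n : ℕ) : Prop :=
  Algebra.FiniteType R A ∧ Module.Flat R A ∧
  ∀ (P : Ideal R) (_ : P.IsPrime),
    Nonempty ((ResidueFieldAt R P ⊗[R] A) ≃ₐ[ResidueFieldAt R P]
      MvPolynomial (Fin n) (ResidueFieldAt R P))

/-- `W` is an `m`-tuple residual variable of the `𝔸ⁿ`-fibration `A` over `R`. -/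
def IsResidualVariable (R A : Type*) [CommRing R] [CommRing A] [Algebra R A]
    (n m : ℕ) (W : Fin m → A) : Prop :=
  AlgebraicIndependent R W ∧
  FibersPolynomialOver R (Algebra.adjoin R (Set.range W)) A (n - m)

/-- A module `M` over `A` is stably free if `M ⊕ Aˢ ≅ Aᵗ` for some `s, t`. -/
def IsStablyFree (A M : Type*) [CommRing A] [AddCommGroup M] [Module A M] : Prop :=
  ∃ s t : ℕ, Nonempty ((M × (Fin s → A)) ≃ₗ[A] (Fin t → A))

end

/-!
Call algebras `A` and `B` over `R` stably isomorphic if `A[X₁, …, Xᵣ] ≅ B[Y₁, …, Yₛ]` over `R`.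
Stable freeness of `Ω` is invariant under stable isomorphism: for `C = A[X₁, …, Xᵣ]` the first
fundamental sequence splits, so `Ω[C⁄R] ≅ (C ⊗ Ω[A⁄R]) ⊕ Cʳ`, and since `A → C` has a retraction,
`Ω[A⁄R]` is stably free over `A` as soon as `C ⊗ Ω[A⁄R]` is stably free over `C`. An `A` which is
stably polynomial over `R[W]` is stably isomorphic to `R[W]`, hence to `R`, and `Ω[R⁄R] = 0`.
-/

namespace IsStablyFree

variable {A M N : Type*} [CommRing A] [AddCommGroup M] [Module A M] [AddCommGroup N] [Module A N]

theorem of_prod_pi_equiv_pi {ι κ : Type*} [Finite ι] [Finite κ]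
    (e : (M × (ι → A)) ≃ₗ[A] (κ → A)) : IsStablyFree A M := by
  obtain ⟨s, ⟨eι⟩⟩ := Finite.exists_equiv_fin ι
  obtain ⟨t, ⟨eκ⟩⟩ := Finite.exists_equiv_fin κ
  exact ⟨s, t, ⟨(LinearEquiv.refl A M).prodCongr (LinearEquiv.funCongrLeft A A eι) ≪≫ₗ e ≪≫ₗ
    LinearEquiv.funCongrLeft A A eκ.symm⟩⟩

theorem of_subsingleton [Subsingleton M] : IsStablyFree A M :=
  ⟨0, 0, ⟨.ofSubsingleton _ _⟩⟩

theorem congr (h : IsStablyFree A M) (e : M ≃ₗ[A] N) : IsStablyFree A N := by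
  obtain ⟨s, t, ⟨f⟩⟩ := h
  exact ⟨s, t, ⟨e.symm.prodCongr (.refl A _) ≪≫ₗ f⟩⟩

theorem prod_pi_iff {ι : Type*} [Finite ι] :
    IsStablyFree A (M × (ι → A)) ↔ IsStablyFree A M := by
  constructor
  · rintro ⟨s, t, ⟨e⟩⟩
    exact of_prod_pi_equiv_pi (ι := ι ⊕ Fin s)
      ((LinearEquiv.refl A M).prodCongr (LinearEquiv.sumArrowLequivProdArrow ι (Fin s) A A) ≪≫ₗ
        (LinearEquiv.prodAssoc A M (ι → A) (Fin s → A)).symm ≪≫ₗ e)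
  · rintro ⟨s, t, ⟨e⟩⟩
    have swap : ((M × (ι → A)) × (Fin s → A)) ≃ₗ[A] (M × (Fin s → A)) × (ι → A) :=
      LinearEquiv.prodAssoc A M (ι → A) (Fin s → A) ≪≫ₗ
        (LinearEquiv.refl A M).prodCongr (LinearEquiv.prodComm A (ι → A) (Fin s → A)) ≪≫ₗ
        (LinearEquiv.prodAssoc A M (Fin s → A) (ι → A)).symm
    exact of_prod_pi_equiv_pi (κ := Fin t ⊕ ι)
      (swap ≪≫ₗ e.prodCongr (.refl A _) ≪≫ₗ
        (LinearEquiv.sumArrowLequivProdArrow (Fin t) ι A A).symm)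

theorem baseChange (B : Type*) [CommRing B] [Algebra A B] (h : IsStablyFree A M) :
    IsStablyFree B (B ⊗[A] M) := by
  obtain ⟨s, t, ⟨e⟩⟩ := h
  exact ⟨s, t, ⟨(LinearEquiv.refl B _).prodCongr (piScalarRight A B B (Fin s)).symm ≪≫ₗ
    (prodRight A B B M (Fin s → A)).symm ≪≫ₗ e.baseChange A B _ _ ≪≫ₗ
    piScalarRight A B B (Fin t)⟩⟩

theorem of_baseChange_of_retraction {C : Type*} [CommRing C] [Algebra A C] (f : C →ₐ[A] A)
    (h : IsStablyFree C (C ⊗[A] M)) : IsStablyFree A M := by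
  let : Algebra C A := f.toAlgebra
  have : IsScalarTower A C A := .of_algebraMap_eq fun a => (f.commutes a).symm
  exact (h.baseChange A).congr
    (AlgebraTensorModule.cancelBaseChange A C A A M ≪≫ₗ TensorProduct.lid A M)

end IsStablyFree

section Kaehler

open scoped KaehlerDifferential

theorem kaehlerDifferential_mapBaseChange_injective (R S T : Type*) [CommRing R] [CommRing S]
    [CommRing T] [Algebra R S] [Algebra R T] [Algebra S T] [IsScalarTower R S T]
    [Subsingleton (Algebra.H1Cotangent S T)] :
    Function.Injective (KaehlerDifferential.mapBaseChange R S T) := by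
  rw [injective_iff_map_eq_zero]
  intro x hx
  obtain ⟨y, rfl⟩ := (Algebra.H1Cotangent.exact_δ_mapBaseChange R S T x).mp hx
  rw [Subsingleton.elim y 0, map_zero]

theorem nonempty_kaehlerDifferential_equiv_prod (R S T : Type*) [CommRing R] [CommRing S]
    [CommRing T] [Algebra R S] [Algebra R T] [Algebra S T] [IsScalarTower R S T]
    [Algebra.FormallySmooth S T] :
    Nonempty (Ω[T⁄R] ≃ₗ[T] (T ⊗[S] Ω[S⁄R]) × Ω[T⁄S]) := by
  obtain ⟨sec, hsec⟩ := Module.projective_lifting_property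
    (KaehlerDifferential.map R S T T) LinearMap.id (KaehlerDifferential.map_surjective R S T)
  exact ⟨((KaehlerDifferential.exact_mapBaseChange_map R S T).splitSurjectiveEquiv
    (kaehlerDifferential_mapBaseChange_injective R S T) ⟨sec, hsec⟩).1⟩

variable {R A B : Type*} [CommRing R] [CommRing A] [CommRing B] [Algebra R A] [Algebra R B]

theorem IsStablyFree.kaehlerDifferential_of_algEquiv (h : IsStablyFree A Ω[A⁄R])
    (e : A ≃ₐ[R] B) : IsStablyFree B Ω[B⁄R] := by
  let : Algebra A B := e.toAlgHom.toAlgebra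
  have : IsScalarTower R A B := .of_algebraMap_eq fun r => (e.commutes r).symm
  have : Algebra.FormallyEtale A B :=
    .of_equiv (AlgEquiv.ofBijective (Algebra.ofId A B) e.bijective)
  exact (h.baseChange B).congr (KaehlerDifferential.tensorKaehlerEquivOfFormallyEtale R A B)

theorem isStablyFree_kaehlerDifferential_congr (e : A ≃ₐ[R] B) :
    IsStablyFree A Ω[A⁄R] ↔ IsStablyFree B Ω[B⁄R] :=
  ⟨fun h => h.kaehlerDifferential_of_algEquiv e, fun h => h.kaehlerDifferential_of_algEquiv e.symm⟩

theorem isStablyFree_kaehlerDifferential_mvPolynomial_iff (σ : Type*) [Finite σ] :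
    IsStablyFree (MvPolynomial σ A) Ω[MvPolynomial σ A⁄R] ↔ IsStablyFree A Ω[A⁄R] := by
  obtain ⟨splitting⟩ := nonempty_kaehlerDifferential_equiv_prod R A (MvPolynomial σ A)
  have e : Ω[MvPolynomial σ A⁄R] ≃ₗ[MvPolynomial σ A]
      (MvPolynomial σ A ⊗[A] Ω[A⁄R]) × (σ → MvPolynomial σ A) :=
    splitting ≪≫ₗ (LinearEquiv.refl _ _).prodCongr
      (KaehlerDifferential.mvPolynomialBasis A σ).equivFun
  constructor
  · intro h
    exact (IsStablyFree.prod_pi_iff.mp (h.congr e)).of_baseChange_of_retraction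
      (MvPolynomial.aeval fun _ => 0)
  · intro h
    exact (IsStablyFree.prod_pi_iff.mpr (h.baseChange _)).congr e.symm

theorem isStablyFree_kaehlerDifferential_iff_of_mvPolynomial_algEquiv {σ τ : Type*} [Finite σ]
    [Finite τ] (e : MvPolynomial σ A ≃ₐ[R] MvPolynomial τ B) :
    IsStablyFree A Ω[A⁄R] ↔ IsStablyFree B Ω[B⁄R] := by
  rw [← isStablyFree_kaehlerDifferential_mvPolynomial_iff σ,
    isStablyFree_kaehlerDifferential_congr e, isStablyFree_kaehlerDifferential_mvPolynomial_iff]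

theorem stablyFree_kaehler_of_stablyPolynomial_over_adjoin_general {ι σ τ : Type*} [Finite ι]
    [Finite σ] [Finite τ] {W : ι → A} (hW : AlgebraicIndependent R W)
    (e : MvPolynomial σ A ≃ₐ[R] MvPolynomial τ (Algebra.adjoin R (Set.range W))) :
    IsStablyFree A Ω[A⁄R] := by
  rw [isStablyFree_kaehlerDifferential_iff_of_mvPolynomial_algEquiv e,
    ← isStablyFree_kaehlerDifferential_congr hW.aevalEquiv,
    isStablyFree_kaehlerDifferential_mvPolynomial_iff]
  exact .of_subsingleton

end Kaehler

/-- Let `R` be a Noetherian ring and `A` an `𝔸ⁿ`-fibration over `R`.  If there is an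
`m`-tuple residual variable `W` of `A` over `R` such that `A` is a stably polynomial
algebra over `R[W]`, then `Ω_R(A)` is a stably free `A`-module. -/
theorem stablyFree_kaehler_of_stablyPolynomial_over_adjoin
    (R A : Type*) [CommRing R] [IsNoetherianRing R] [CommRing A] [Algebra R A]
    (n m : ℕ) (hA : IsAffineFibration R A n)
    (W : Fin m → A) (hW : IsResidualVariable R A n m W)
    (hstab : ∃ r s : ℕ,
      Nonempty (MvPolynomial (Fin r) A ≃ₐ[↥(Algebra.adjoin R (Set.range W))]
        MvPolynomial (Fin s) ↥(Algebra.adjoin R (Set.range W)))) :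
    IsStablyFree A (KaehlerDifferential R A) := by
  obtain ⟨r, s, ⟨e⟩⟩ := hstab
  exact stablyFree_kaehler_of_stablyPolynomial_over_adjoin_general hW.1 (e.restrictScalars R)
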